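/- Let α_0 be a real number that is not equal to 0, −1, −2, … (i.e. α_0 ∉ −ℕ), let k ≥ 0 be an integer, and let r_0, …, r_k be pairwise distinct strictly positive real numbers. Then I_{α_0+k,k}(r_0,…,r_k) = [(−1)^k / (α_0 (α_0+1) ⋯ (α_0+k−1))] · Σ_{i=0}^{k} [ ∏_{j=0, j≠i}^{k} (r_i − r_j)^{−1} ] · r_i^{−α_0}, where for k = 0 the empty product of coefficients is 1 and the formula reads I_{α_0,0}(r_0) = r_0^{−α_0}. -/

import Mathlib

/-! The formula is the Hermite–Genocchi formula for `f(x) = x^{-α₀}`: the integral over the simplex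
of `f^{(k)}` evaluated at the affine form `L(s) = r_0 + Σ s_i (r_i - r_{i-1})` is the divided
difference of `f` at the nodes `r_0,…,r_k`, and
`f^{(k)}(x) = (-1)^k α₀(α₀+1)⋯(α₀+k-1) x^{-α₀-k}`.

The proof is by induction on `k`, integrating out the innermost variable `s_k ∈ [0, s_{k-1}]`
(with `s_0 = 1`). Along that segment `L` is affine with slope `r_k - r_{k-1}`, and its end values are
the affine forms for the nodes with `r_k`, respectively `r_{k-1}`, deleted (`affForm_snoc`,
`affForm_snoc_sub`). By Fubini and the fundamental theorem of calculus the integral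
therefore obeys the recursion of divided differences, with the extra factor `-1/(α₀+k-1)`
(`simplexInt_step`); the explicit sum obeys the recursion without that factor (`divDiff_step`). Interpolation between the two end values also gives positivity
of `L` on the simplex (`affForm_pos`). -/

open MeasureTheory Finset

/-- The `k`-simplex `Δ_k = {s : 0 ≤ s_k ≤ ⋯ ≤ s_1 ≤ 1}` (indices shifted to `0,…,k-1`). -/
def simplexSet (k : ℕ) : Set (Fin k → ℝ) :=
  {s | (∀ i, 0 ≤ s i) ∧ (∀ i, s i ≤ 1) ∧ ∀ i j : Fin k, i ≤ j → s j ≤ s i}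

/-- `I_{α,k}(r_0,…,r_k)`: for `k ≥ 1` the integral over the simplex `Δ_k` of
`[(1-s_1)r_0 + (s_1-s_2)r_1 + ⋯ + s_k r_k]^{-α} = [r_0 + Σ_i s_i (r_i - r_{i-1})]^{-α}`,
and `I_{α,0}(r_0) = r_0^{-α}`. -/
noncomputable def heatI (α : ℝ) : (k : ℕ) → (Fin (k + 1) → ℝ) → ℝ
  | 0, r => r 0 ^ (-α)
  | (k + 1), r =>
      ∫ s in simplexSet (k + 1),
        (r 0 + ∑ i : Fin (k + 1), s i * (r i.succ - r i.castSucc)) ^ (-α)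

/-- The affine form `r_0 + Σ s_i (r_i - r_{i-1})` whose power is integrated over the simplex. -/
def affForm (k : ℕ) (r : Fin (k + 1) → ℝ) (s : Fin k → ℝ) : ℝ :=
  r 0 + ∑ i : Fin k, s i * (r i.succ - r i.castSucc)

/-- The integral of `L^{-α}` over the simplex, uniformly in `k`, including `k = 0`, where the
simplex is a point of mass one. -/
noncomputable def simplexInt (α : ℝ) (k : ℕ) (r : Fin (k + 1) → ℝ) : ℝ :=
  ∫ s in simplexSet k, (affForm k r s) ^ (-α)

/-- The last entry of `(1, s_1, …, s_k)`, which is the upper bound for the next simplex variable. -/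
def lastBound (k : ℕ) (s : Fin k → ℝ) : ℝ := (Fin.cons 1 s : Fin (k + 1) → ℝ) (Fin.last k)

/-- The weight `∏_{j ≠ i} (q_i - q_j)⁻¹` of a divided difference. -/
noncomputable def ddWeight (k : ℕ) (q : Fin k → ℝ) (i : Fin k) : ℝ :=
  ∏ j ∈ Finset.univ.erase i, (q i - q j)⁻¹

/-- The divided difference of `f` at the (distinct) nodes `q`. -/
noncomputable def divDiff (f : ℝ → ℝ) (k : ℕ) (q : Fin k → ℝ) : ℝ :=
  ∑ i, ddWeight k q i * f (q i)

lemma heatI_eq_simplexInt (α : ℝ) (k : ℕ) (r : Fin (k + 1) → ℝ) :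
    heatI α k r = simplexInt α k r := by
  cases k with
  | zero =>
    -- Lebesgue measure on `Fin 0 → ℝ` is the Dirac mass at its only point.
    have h : simplexSet 0 = Set.univ := by
      ext s; simp [simplexSet]
    simp [heatI, simplexInt, affForm, h, Measure.volume_pi_eq_dirac (0 : Fin 0 → ℝ)]
  | succ k => rfl

lemma affForm_snoc (k : ℕ) (q s : Fin k → ℝ) (a b t : ℝ) :
    affForm (k + 1) (Fin.snoc (α := fun _ => ℝ) (Fin.snoc (α := fun _ => ℝ) q a) b)
      (Fin.snoc (α := fun _ => ℝ) s t)
      = affForm k (Fin.snoc (α := fun _ => ℝ) q a) s + t * (b - a) := by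
  have h0 : (0 : Fin (k + 2)) = Fin.castSucc 0 := rfl
  simp only [affForm, Fin.sum_univ_castSucc, Fin.snoc_castSucc, Fin.snoc_last, Fin.succ_castSucc,
    Fin.succ_last, h0]
  ring

/-- At the upper end `t = lastBound k s` the node `a` is replaced by `b`. -/
lemma affForm_snoc_sub (k : ℕ) (q s : Fin k → ℝ) (a b : ℝ) :
    affForm k (Fin.snoc (α := fun _ => ℝ) q b) s
      = affForm k (Fin.snoc (α := fun _ => ℝ) q a) s + lastBound k s * (b - a) := by
  cases k with
  | zero => simp [affForm, lastBound, Fin.snoc]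
  | succ k =>
    have h0 : (0 : Fin (k + 2)) = Fin.castSucc 0 := rfl
    have h1 : Fin.last (k + 1) = (Fin.last k).succ := rfl
    simp only [affForm, Fin.sum_univ_castSucc, Fin.snoc_castSucc, Fin.snoc_last, Fin.succ_castSucc,
      Fin.succ_last, h0, lastBound]
    rw [h1, Fin.cons_succ]
    ring

lemma snoc_mem_simplexSet (k : ℕ) (s : Fin k → ℝ) (t : ℝ) :
    (Fin.snoc (α := fun _ => ℝ) s t : Fin (k + 1) → ℝ) ∈ simplexSet (k + 1) ↔
      s ∈ simplexSet k ∧ t ∈ Set.Icc 0 (lastBound k s) := by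
  cases k with
  | zero =>
    simp [simplexSet, lastBound, Fin.forall_fin_one, Fin.snoc]
  | succ k =>
    have h1 : Fin.last (k + 1) = (Fin.last k).succ := rfl
    have h2 : lastBound (k + 1) s = s (Fin.last k) := by
      rw [lastBound, h1, Fin.cons_succ]
    rw [h2]
    constructor
    · rintro ⟨h0, h1, h⟩
      refine ⟨⟨fun i => ?_, fun i => ?_, fun i j hij => ?_⟩, ?_, ?_⟩
      · simpa using h0 i.castSucc
      · simpa using h1 i.castSucc
      · simpa using h i.castSucc j.castSucc (by simpa using hij)
      · simpa using h0 (Fin.last _)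
      · simpa using h (Fin.last k).castSucc (Fin.last _) (Fin.le_last _)
    · rintro ⟨⟨h0, h1, h⟩, ht0, ht1⟩
      refine ⟨fun i => ?_, fun i => ?_, fun i j hij => ?_⟩
      · induction i using Fin.lastCases with
        | last => simpa using ht0
        | cast i => simpa using h0 i
      · induction i using Fin.lastCases with
        | last => simpa using ht1.trans (h1 _)
        | cast i => simpa using h1 i
      · induction j using Fin.lastCases with
        | last =>
          induction i using Fin.lastCases with
          | last => simp
          | cast i => simpa using ht1.trans (h _ _ (Fin.le_last i))
        | cast j =>
          induction i using Fin.lastCases with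
          | last => exact absurd hij (by simp)
          | cast i => simpa using h i j (by simpa using hij)

lemma lastBound_nonneg (k : ℕ) (s : Fin k → ℝ) (hs : s ∈ simplexSet k) : 0 ≤ lastBound k s := by
  cases k with
  | zero => simp [lastBound]
  | succ k =>
    have h1 : Fin.last (k + 1) = (Fin.last k).succ := rfl
    rw [lastBound, h1, Fin.cons_succ]
    exact hs.1 _

lemma isCompact_simplexSet (k : ℕ) : IsCompact (simplexSet k) := by
  have h : IsClosed (simplexSet k) := by
    simp only [simplexSet, Set.ofPred_and, Set.ofPred_forall]
    refine IsClosed.inter ?_ (IsClosed.inter ?_ ?_)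
    · exact isClosed_iInter fun i => isClosed_le continuous_const (continuous_apply i)
    · exact isClosed_iInter fun i => isClosed_le (continuous_apply i) continuous_const
    · exact isClosed_iInter fun i => isClosed_iInter fun j => isClosed_iInter fun _ =>
        isClosed_le (continuous_apply j) (continuous_apply i)
  refine (isCompact_Icc (a := (0 : Fin k → ℝ)) (b := 1)).of_isClosed_subset h ?_
  intro s hs
  exact ⟨hs.1, hs.2.1⟩

/-- An affine function positive at both ends of an interval is positive on it. -/
lemma pos_of_ends {A c t B : ℝ} (h0 : 0 < A) (h1 : 0 < A + B * c) (ht : t ∈ Set.Icc 0 B) :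
    0 < A + t * c := by
  obtain ⟨ht0, ht1⟩ := ht
  rcases le_total 0 c with hc | hc
  · have := mul_nonneg ht0 hc
    linarith
  · have := mul_le_mul_of_nonpos_right ht1 hc
    linarith

lemma affForm_pos (k : ℕ) (r : Fin (k + 1) → ℝ) (hr : ∀ i, 0 < r i) (s : Fin k → ℝ)
    (hs : s ∈ simplexSet k) : 0 < affForm k r s := by
  induction k with
  | zero => simpa [affForm] using hr 0
  | succ k ih =>
    induction r using Fin.snocCases with | _ r b
    induction r using Fin.snocCases with | _ q a
    induction s using Fin.snocCases with | _ s t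
    rw [snoc_mem_simplexSet] at hs
    have hq : ∀ i, 0 < q i := fun i => by simpa using hr i.castSucc.castSucc
    have ha : 0 < a := by simpa using hr (Fin.last k).castSucc
    have hb : 0 < b := by simpa using hr (Fin.last (k + 1))
    rw [affForm_snoc]
    refine pos_of_ends (ih _ (fun i => ?_) s hs.1) ?_ hs.2
    · induction i using Fin.lastCases <;> simp [hq, ha]
    · rw [← affForm_snoc_sub]
      refine ih _ (fun i => ?_) s hs.1
      induction i using Fin.lastCases <;> simp [hq, hb]

lemma continuous_affForm (k : ℕ) (r : Fin (k + 1) → ℝ) : Continuous (affForm k r) := by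
  unfold affForm
  fun_prop

lemma integrableOn_affForm_rpow (α : ℝ) (k : ℕ) (r : Fin (k + 1) → ℝ) (hr : ∀ i, 0 < r i) :
    IntegrableOn (fun s => affForm k r s ^ α) (simplexSet k) := by
  refine ContinuousOn.integrableOn_compact (isCompact_simplexSet k) ?_
  exact (continuous_affForm k r).continuousOn.rpow_const
    fun s hs => Or.inl (affForm_pos k r hr s hs).ne'

lemma integral_affine_rpow {A c B β : ℝ} (hB : 0 ≤ B) (h0 : 0 < A) (h1 : 0 < A + B * c)
    (hβ : β ≠ 0) (hc : c ≠ 0) :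
    ∫ t in Set.Icc 0 B, (A + t * c) ^ (-(β + 1))
      = -(1 / (β * c)) * ((A + B * c) ^ (-β) - A ^ (-β)) := by
  rw [integral_Icc_eq_integral_Ioc, ← intervalIntegral.integral_of_le hB]
  have hpos : ∀ t ∈ Set.uIcc 0 B, 0 < A + t * c := fun t ht =>
    pos_of_ends h0 h1 (by rwa [Set.uIcc_of_le hB] at ht)
  rw [intervalIntegral.integral_eq_sub_of_hasDerivAt
    (f := fun t => -(1 / (β * c)) * (A + t * c) ^ (-β))]
  · simp only [zero_mul, add_zero]
    ring
  · intro t ht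
    have h := ((((hasDerivAt_id t).mul_const c).const_add A).rpow_const (p := -β)
      (Or.inl (hpos t ht).ne')).const_mul (-(1 / (β * c)))
    refine h.congr_deriv ?_
    have : -(β + 1) = -β - 1 := by ring
    simp only [id, this]
    field_simp
  · refine ContinuousOn.intervalIntegrable ?_
    exact ContinuousOn.rpow_const (by fun_prop) fun t ht => Or.inl (hpos t ht).ne'

/-- The recursion of divided differences for the simplex integral, with an extra factor `-1/β` from
the antiderivative of `x^{-(β+1)}`. -/
lemma simplexInt_step (β : ℝ) (hβ : β ≠ 0) (k : ℕ) (q : Fin k → ℝ) (a b : ℝ)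
    (hq : ∀ i, 0 < q i) (ha : 0 < a) (hb : 0 < b) (hab : a ≠ b) :
    simplexInt (β + 1) (k + 1) (Fin.snoc (α := fun _ => ℝ) (Fin.snoc (α := fun _ => ℝ) q a) b)
      = -(1 / (β * (b - a))) * (simplexInt β k (Fin.snoc (α := fun _ => ℝ) q b)
          - simplexInt β k (Fin.snoc (α := fun _ => ℝ) q a)) := by
  have hqa : ∀ i, 0 < (Fin.snoc (α := fun _ => ℝ) q a : Fin (k + 1) → ℝ) i := fun i => by
    induction i using Fin.lastCases <;> simp [hq, ha]
  have hqb : ∀ i, 0 < (Fin.snoc (α := fun _ => ℝ) q b : Fin (k + 1) → ℝ) i := fun i => by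
    induction i using Fin.lastCases <;> simp [hq, hb]
  have hqab : ∀ i, 0 < (Fin.snoc (α := fun _ => ℝ) (Fin.snoc (α := fun _ => ℝ) q a) b :
      Fin (k + 2) → ℝ) i := fun i => by
    induction i using Fin.lastCases with
    | last => simpa using hb
    | cast i => simpa using hqa i
  have hmeas : ∀ k, MeasurableSet (simplexSet k) := fun k =>
    (isCompact_simplexSet k).isClosed.measurableSet
  have hint := (integrable_indicator_iff (hmeas (k + 1))).2
    (integrableOn_affForm_rpow (-(β + 1)) (k + 1) _ hqab)
  have hmp := (volume_preserving_piFinSuccAbove (fun _ : Fin (k + 1) => ℝ) (Fin.last k)).symm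
  have hsnoc : ∀ p : ℝ × (Fin k → ℝ),
      (MeasurableEquiv.piFinSuccAbove (fun _ : Fin (k + 1) => ℝ) (Fin.last k)).symm p
        = (Fin.snoc (α := fun _ => ℝ) p.2 p.1 : Fin (k + 1) → ℝ) := fun p => by
    rw [← Fin.insertNth_last']
    rfl
  rw [simplexInt, ← integral_indicator (hmeas (k + 1)), ← hmp.integral_comp']
  have hint' := (hmp.integrable_comp_emb (MeasurableEquiv.measurableEmbedding _)).2 hint
  simp only [Function.comp_def] at hint'
  rw [Measure.volume_eq_prod] at hint' ⊢
  rw [integral_prod_symm _ hint', simplexInt, simplexInt,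
    ← integral_sub (integrableOn_affForm_rpow _ k _ hqb) (integrableOn_affForm_rpow _ k _ hqa),
    ← integral_const_mul, ← integral_indicator (hmeas k)]
  congr 1
  funext s
  simp only [hsnoc]
  by_cases hs : s ∈ simplexSet k
  · rw [Set.indicator_of_mem hs, affForm_snoc_sub k q s a b,
      ← integral_affine_rpow (lastBound_nonneg k s hs) (affForm_pos k _ hqa s hs)
        (by rw [← affForm_snoc_sub]; exact affForm_pos k _ hqb s hs) hβ (sub_ne_zero.2 hab.symm),
      ← integral_indicator measurableSet_Icc]
    congr 1
    funext t
    simp only [Set.indicator, snoc_mem_simplexSet, hs, true_and, affForm_snoc]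
  · rw [Set.indicator_of_notMem hs]
    simp [Set.indicator, snoc_mem_simplexSet, hs]

lemma ddWeight_snoc_castSucc (k : ℕ) (q : Fin k → ℝ) (a : ℝ) (i : Fin k) :
    ddWeight (k + 1) (Fin.snoc (α := fun _ => ℝ) q a) i.castSucc
      = ddWeight k q i * (q i - a)⁻¹ := by
  have h : ∀ (n : ℕ) (i : Fin n) (g : Fin n → ℝ),
      ∏ j ∈ Finset.univ.erase i, g j = ∏ j, if j = i then 1 else g j := fun n i g => by
    rw [← Finset.mul_prod_erase Finset.univ _ (Finset.mem_univ i)]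
    rw [if_pos rfl, one_mul]
    exact Finset.prod_congr rfl fun j hj => (if_neg (Finset.ne_of_mem_erase hj)).symm
  simp only [ddWeight, h]
  rw [Fin.prod_univ_castSucc]
  simp [(Fin.castSucc_lt_last i).ne']

lemma ddWeight_snoc_last (k : ℕ) (q : Fin k → ℝ) (a : ℝ) :
    ddWeight (k + 1) (Fin.snoc (α := fun _ => ℝ) q a) (Fin.last k) = ∏ j, (a - q j)⁻¹ := by
  have h : Finset.univ.erase (Fin.last k) = Finset.univ.map Fin.castSuccEmb := by
    ext j
    induction j using Fin.lastCases with
    | last => simp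
    | cast j => simp [(Fin.castSucc_lt_last j).ne]
  simp [ddWeight, h]

lemma divDiff_snoc (f : ℝ → ℝ) (k : ℕ) (q : Fin k → ℝ) (a : ℝ) :
    divDiff f (k + 1) (Fin.snoc (α := fun _ => ℝ) q a)
      = ∑ i, ddWeight k q i * (q i - a)⁻¹ * f (q i) + (∏ j, (a - q j)⁻¹) * f a := by
  simp [divDiff, Fin.sum_univ_castSucc, ddWeight_snoc_castSucc, ddWeight_snoc_last]

/-- The divided difference recursion, with the last two nodes as the ones to delete. -/
lemma divDiff_step (f : ℝ → ℝ) (k : ℕ) (q : Fin k → ℝ) (a b : ℝ)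
    (hqa : ∀ i, q i ≠ a) (hqb : ∀ i, q i ≠ b) (hab : a ≠ b) :
    divDiff f (k + 2) (Fin.snoc (α := fun _ => ℝ) (Fin.snoc (α := fun _ => ℝ) q a) b)
      = (1 / (b - a)) * (divDiff f (k + 1) (Fin.snoc (α := fun _ => ℝ) q b)
          - divDiff f (k + 1) (Fin.snoc (α := fun _ => ℝ) q a)) := by
  have hba : b - a ≠ 0 := sub_ne_zero.2 hab.symm
  have hab' : a - b ≠ 0 := sub_ne_zero.2 hab
  rw [divDiff_snoc, divDiff_snoc, divDiff_snoc, Fin.sum_univ_castSucc, Fin.prod_univ_castSucc]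
  simp only [ddWeight_snoc_castSucc, ddWeight_snoc_last, Fin.snoc_castSucc, Fin.snoc_last]
  have h : ∑ i, ddWeight k q i * (q i - a)⁻¹ * (q i - b)⁻¹ * f (q i)
      = (1 / (b - a)) * (∑ i, ddWeight k q i * (q i - b)⁻¹ * f (q i)
        - ∑ i, ddWeight k q i * (q i - a)⁻¹ * f (q i)) := by
    rw [← Finset.sum_sub_distrib, Finset.mul_sum]
    refine Finset.sum_congr rfl fun i _ => ?_
    have h1 := sub_ne_zero.2 (hqa i)
    have h2 := sub_ne_zero.2 (hqb i)
    field_simp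
    ring
  have h3 : (a - b)⁻¹ = -(1 / (b - a)) := by
    rw [← neg_sub b a, inv_neg, one_div]
  rw [h, h3]
  ring

/-- Descending-chain solution (Cases 2 and 3): for `α₀ ∉ -ℕ`, `k ≥ 0`, and pairwise distinct
strictly positive `r_0,…,r_k`,
`I_{α₀+k,k}(r_0,…,r_k) = [(-1)^k / (α₀(α₀+1)⋯(α₀+k-1))] Σ_i [∏_{j≠i}(r_i-r_j)⁻¹] r_i^{-α₀}`. -/
theorem heatI_descending_chain (α₀ : ℝ) (hα₀ : ∀ n : ℕ, α₀ ≠ -(n : ℝ)) (k : ℕ)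
    (r : Fin (k + 1) → ℝ) (hr : ∀ i, 0 < r i) (hinj : Function.Injective r) :
    heatI (α₀ + k) k r
      = ((-1 : ℝ) ^ k / ∏ j ∈ Finset.range k, (α₀ + j)) *
        ∑ i, (∏ j ∈ Finset.univ.erase i, (r i - r j)⁻¹) * r i ^ (-α₀) := by
  change _ = _ * divDiff (fun x => x ^ (-α₀)) (k + 1) r
  rw [heatI_eq_simplexInt]
  induction k with
  | zero =>
    rw [← heatI_eq_simplexInt]
    simp [heatI, divDiff, ddWeight]
  | succ k ih =>
    induction r using Fin.snocCases with | _ r b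
    induction r using Fin.snocCases with | _ q a
    have hq : ∀ i, 0 < q i := fun i => by simpa using hr i.castSucc.castSucc
    have ha : 0 < a := by simpa using hr (Fin.last k).castSucc
    have hb : 0 < b := by simpa using hr (Fin.last (k + 1))
    rw [Fin.snoc_injective_iff, Fin.snoc_injective_iff] at hinj
    obtain ⟨⟨hqi, haq⟩, hbq⟩ := hinj
    have hab : a ≠ b := fun h => hbq ⟨Fin.last k, by simpa using h⟩
    have hqa : ∀ i, q i ≠ a := fun i h => haq ⟨i, h⟩
    have hqb : ∀ i, q i ≠ b := fun i h => hbq ⟨i.castSucc, by simpa using h⟩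
    have hβ : α₀ + k ≠ 0 := fun h => hα₀ k (eq_neg_of_add_eq_zero_left h)
    have hcast : α₀ + ((k + 1 : ℕ) : ℝ) = α₀ + k + 1 := by push_cast; ring
    rw [hcast, simplexInt_step _ hβ k q a b hq ha hb hab, divDiff_step _ k q a b hqa hqb hab,
      ih _ (fun i => by induction i using Fin.lastCases <;> simp [hq, ha])
        (Fin.snoc_injective_iff.2 ⟨hqi, haq⟩),
      ih _ (fun i => by induction i using Fin.lastCases <;> simp [hq, hb])
        (Fin.snoc_injective_iff.2 ⟨hqi, fun ⟨i, h⟩ => hqb i h⟩),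
      Finset.prod_range_succ, pow_succ, one_div, mul_inv, one_div, div_eq_mul_inv, div_eq_mul_inv,
      mul_inv]
    ring
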